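/- Fix real parameters 0 < x1 ≤ 1 and 0 < x2, y1, y2 ≤ 1 with x2 > y1·y2. Then the quantity N(R) = 2 Σ_{Q' ≥ R/y2} Σ_{1 ≤ Q ≤ min(x2 Q', y1 R), gcd(Q,Q')=1} x1/(Q'(Q' + x1 Q)) satisfies N(R) = -(2/ζ(2)) Li2(-x1 y1 y2) + O(x1 log R / R) as R → ∞. -/

import Mathlib

open Real

/-- The dilogarithm `Li₂(z) = ∑_{k ≥ 1} z^k / k²`. -/
noncomputable def Li2 (z : ℝ) : ℝ := ∑' k : ℕ, z ^ (k + 1) / ((k : ℝ) + 1) ^ 2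

/-- `N(R) = 2 ∑_{Q' ≥ R/y₂} ∑_{1 ≤ Q ≤ min(x₂Q', y₁R), (Q,Q')=1} x₁/(Q'(Q'+x₁Q))`. -/
noncomputable def NN (x1 x2 y1 y2 R : ℝ) : ℝ :=
  2 * ∑' Q' : ℕ, if R / y2 ≤ (Q' : ℝ) then
    ∑ Q ∈ Finset.Icc 1 ⌊min (x2 * Q') (y1 * R)⌋₊,
      if Nat.gcd Q Q' = 1 then x1 / ((Q' : ℝ) * ((Q' : ℝ) + x1 * Q)) else 0
  else 0

open Filter Topology Finset

/-! ### The dilogarithm on `(-1, 0]` -/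

lemma Li2_zero : Li2 0 = 0 := by
  simp [Li2]

lemma hasDerivAt_Li2 {z : ℝ} (hz : |z| < 1) :
    HasDerivAt Li2 (∑' k : ℕ, z ^ k / ((k : ℝ) + 1)) z := by
  obtain ⟨r, hzr, hr⟩ := exists_between hz
  have hr0 : 0 ≤ r := (abs_nonneg z).trans hzr.le
  refine hasDerivAt_tsum_of_isPreconnected (u := fun k : ℕ => r ^ k)
    (t := Metric.ball 0 r) (y₀ := 0) (g := fun (k : ℕ) (z : ℝ) => z ^ (k + 1) / ((k : ℝ) + 1) ^ 2)
    (g' := fun (k : ℕ) (z : ℝ) => z ^ k / ((k : ℝ) + 1))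
    (summable_geometric_of_lt_one hr0 hr) Metric.isOpen_ball
    (convex_ball (0 : ℝ) r).isPreconnected ?_ ?_ ?_ ?_ ?_
  · intro k y _
    have h := (hasDerivAt_pow (k + 1) y).div_const (((k : ℝ) + 1) ^ 2)
    convert! h using 1
    have : (k : ℝ) + 1 ≠ 0 := by positivity
    push_cast
    field_simp
  · intro k y hy
    rw [mem_ball_zero_iff] at hy
    rw [norm_div, norm_pow]
    have h1 : (1 : ℝ) ≤ ‖(k : ℝ) + 1‖ := by
      rw [Real.norm_of_nonneg (by positivity)]; linarith [k.cast_nonneg (α := ℝ)]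
    calc ‖y‖ ^ k / ‖(k : ℝ) + 1‖ ≤ ‖y‖ ^ k := div_le_self (by positivity) h1
      _ ≤ r ^ k := by gcongr
  · exact Metric.mem_ball_self ((abs_nonneg z).trans_lt hzr)
  · simp
  · simpa using hzr

lemma hasDerivAt_neg_Li2_neg {z : ℝ} (hz0 : 0 < z) (hz : z < 1) :
    HasDerivAt (fun w => -Li2 (-w)) (log (1 + z) / z) z := by
  have habs : |-z| < 1 := by rw [abs_neg, abs_of_pos hz0]; exact hz
  have h := ((hasDerivAt_Li2 habs).scomp z (hasDerivAt_neg z)).neg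
  convert! h using 1
  have hs := (hasSum_pow_div_log_of_abs_lt_one habs).div_const (-z)
  have he : ∑' k : ℕ, (-z) ^ k / ((k : ℝ) + 1) = -log (1 - -z) / -z := by
    rw [← hs.tsum_eq]
    refine tsum_congr fun k => ?_
    have : (k : ℝ) + 1 ≠ 0 := by positivity
    have := hz0.ne'
    rw [pow_succ]
    field_simp
  rw [he]
  simp

lemma log_one_add_div_anti {u v : ℝ} (hu : 0 < u) (huv : u ≤ v) :
    log (1 + v) / v ≤ log (1 + u) / u := by
  have hv : 0 < v := hu.trans_le huv
  have h := strictConcaveOn_log_Ioi.concaveOn.2 (Set.mem_Ioi.mpr one_pos)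
    (Set.mem_Ioi.mpr (show 0 < 1 + v by linarith))
    (show 0 ≤ 1 - u / v by rw [sub_nonneg, div_le_one hv]; exact huv)
    (show 0 ≤ u / v by positivity) (by ring)
  have e : (1 - u / v) • (1 : ℝ) + (u / v) • (1 + v) = 1 + u := by
    simp only [smul_eq_mul]; field_simp; ring
  rw [e] at h
  simp only [log_one, smul_eq_mul, mul_zero, zero_add] at h
  rw [le_div_iff₀ hu]
  calc log (1 + v) / v * u = u / v * log (1 + v) := by ring
    _ ≤ _ := h

lemma log_one_add_div_le_one {u : ℝ} (hu : 0 < u) : log (1 + u) / u ≤ 1 := by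
  rw [div_le_one hu]
  linarith [log_le_sub_one_of_pos (show 0 < 1 + u by linarith)]

lemma exists_neg_Li2_neg_sub_eq {u v : ℝ} (hu : 0 ≤ u) (huv : u < v) (hv : v < 1) :
    ∃ w, u < w ∧ w < v ∧ -Li2 (-v) - -Li2 (-u) = (v - u) * (log (1 + w) / w) := by
  have hcont : ContinuousOn (fun w => -Li2 (-w)) (Set.Icc u v) := by
    intro w hw
    have habs : |-w| < 1 := by
      rw [abs_neg, abs_of_nonneg (hu.trans hw.1)]; exact hw.2.trans_lt hv
    exact ((hasDerivAt_Li2 habs).continuousAt.comp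
      (f := fun w : ℝ => -w) continuous_neg.continuousAt).neg.continuousWithinAt
  obtain ⟨w, hw, h⟩ := exists_hasDerivAt_eq_slope (fun w => -Li2 (-w))
    (fun w => log (1 + w) / w) huv hcont
    fun w hw => hasDerivAt_neg_Li2_neg (hu.trans_lt hw.1) (hw.2.trans hv)
  refine ⟨w, hw.1, hw.2, ?_⟩
  have : v - u ≠ 0 := by linarith
  rw [h]
  field_simp

lemma le_neg_Li2_neg_sub {u v : ℝ} (hu : 0 ≤ u) (huv : u ≤ v) (hv : v < 1) :
    (v - u) * (log (1 + v) / v) ≤ -Li2 (-v) - -Li2 (-u) := by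
  rcases huv.eq_or_lt with rfl | h
  · simp
  obtain ⟨w, h1, h2, h3⟩ := exists_neg_Li2_neg_sub_eq hu h hv
  rw [h3]
  exact mul_le_mul_of_nonneg_left (log_one_add_div_anti (hu.trans_lt h1) h2.le) (by linarith)

lemma neg_Li2_neg_sub_le {u v : ℝ} (hu : 0 < u) (huv : u ≤ v) (hv : v < 1) :
    -Li2 (-v) - -Li2 (-u) ≤ (v - u) * (log (1 + u) / u) := by
  rcases huv.eq_or_lt with rfl | h
  · simp
  obtain ⟨w, h1, h2, h3⟩ := exists_neg_Li2_neg_sub_eq hu.le h hv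
  rw [h3]
  exact mul_le_mul_of_nonneg_left (log_one_add_div_anti hu h1.le) (by linarith)

lemma neg_Li2_neg_sub_le_sub {u v : ℝ} (hu : 0 ≤ u) (huv : u ≤ v) (hv : v < 1) :
    -Li2 (-v) - -Li2 (-u) ≤ v - u := by
  rcases huv.eq_or_lt with rfl | h
  · simp
  obtain ⟨w, h1, h2, h3⟩ := exists_neg_Li2_neg_sub_eq hu h hv
  rw [h3]
  exact mul_le_of_le_one_right (by linarith) (log_one_add_div_le_one (hu.trans_lt h1))

lemma neg_Li2_neg_mono {u v : ℝ} (hu : 0 ≤ u) (huv : u ≤ v) (hv : v < 1) :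
    -Li2 (-u) ≤ -Li2 (-v) := by
  have h := le_neg_Li2_neg_sub hu huv hv
  have : 0 ≤ (v - u) * (log (1 + v) / v) :=
    mul_nonneg (by linarith) (div_nonneg (log_nonneg (by linarith)) (by linarith))
  linarith

/-- Riemann sums of `log (1 + w) / w` with mesh `δ` approximate the dilogarithm up to `2 δ`. -/
lemma abs_sum_log_one_add_sub_le {δ A : ℝ} (hδ : 0 < δ) (hA : 0 ≤ A) (hA1 : δ * A < 1) :
    |∑ q ∈ Icc 1 ⌊A⌋₊, log (1 + δ * q) / q - -Li2 (-(δ * A))| ≤ 2 * δ := by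
  have hterm : ∀ q : ℕ, log (1 + δ * q) / q = δ * (log (1 + δ * q) / (δ * q)) := by
    intro q
    field_simp
  have hlow : ∀ n : ℕ, δ * n < 1 →
      ∑ q ∈ Icc 1 n, log (1 + δ * q) / q ≤ -Li2 (-(δ * n)) := by
    intro n
    induction n with
    | zero => simp [Li2_zero]
    | succ n ih =>
      intro hn
      push_cast at hn
      have h1 := ih (by nlinarith)
      have h2 := le_neg_Li2_neg_sub (u := δ * n) (v := δ * (n + 1)) (by positivity)
        (by nlinarith) hn
      rw [sum_Icc_succ_top (by omega), hterm (n + 1)]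
      push_cast
      have e : δ * ((n : ℝ) + 1) - δ * n = δ := by ring
      rw [e] at h2
      linarith
  have hupp : ∀ n : ℕ, δ * (n + 1) < 1 →
      -Li2 (-(δ * (n + 1))) ≤ δ + ∑ q ∈ Icc 1 n, log (1 + δ * q) / q := by
    intro n
    induction n with
    | zero =>
      intro hn
      have := neg_Li2_neg_sub_le_sub le_rfl hδ.le (by simpa using hn)
      simpa [Li2_zero] using this
    | succ n ih =>
      intro hn
      push_cast at hn ⊢
      have h1 := ih (by nlinarith)
      have h2 := neg_Li2_neg_sub_le (u := δ * (n + 1)) (v := δ * (n + 1 + 1)) (by positivity)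
        (by nlinarith) hn
      rw [sum_Icc_succ_top (by omega), hterm (n + 1)]
      push_cast
      have e : δ * ((n : ℝ) + 1 + 1) - δ * (n + 1) = δ := by ring
      rw [e] at h2
      linarith
  have hfl := Nat.floor_le hA
  have hfl' := Nat.lt_floor_add_one A
  have hn1 : δ * ⌊A⌋₊ < 1 := lt_of_le_of_lt (by gcongr) hA1
  have hmono := neg_Li2_neg_mono (u := δ * ⌊A⌋₊) (v := δ * A) (by positivity) (by gcongr) hA1
  have hlip := neg_Li2_neg_sub_le_sub (u := δ * ⌊A⌋₊) (v := δ * A) (by positivity) (by gcongr) hA1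
  have hlow' := hlow _ hn1
  have hdiff : δ * A - δ * ⌊A⌋₊ ≤ δ := by nlinarith
  have hupp' : -Li2 (-(δ * ⌊A⌋₊)) ≤ δ + ∑ q ∈ Icc 1 ⌊A⌋₊, log (1 + δ * q) / q := by
    generalize ⌊A⌋₊ = n at hn1
    cases n with
    | zero => simpa [Li2_zero] using hδ.le
    | succ n =>
      push_cast at hn1 ⊢
      refine (hupp n hn1).trans ?_
      rw [sum_Icc_succ_top (by omega)]
      have : 0 ≤ log (1 + δ * ((n + 1 : ℕ) : ℝ)) / ((n + 1 : ℕ) : ℝ) :=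
        div_nonneg (log_nonneg (le_add_of_nonneg_right (by positivity))) (by positivity)
      linarith
  rw [abs_le]
  constructor <;> linarith

/-! ### Tails of `∑ x / (m (m + x q))` -/

lemma mul_le_log_one_add_div_sub {a t s : ℝ} (ha : 0 < a) (ht : 0 < t) (hs : 0 ≤ s) :
    s * (a / ((t + s) * (t + s + a))) ≤ log (1 + a / t) - log (1 + a / (t + s)) := by
  rw [← log_div (by positivity) (by positivity)]
  refine le_trans ?_ (one_sub_inv_le_log_of_pos (by positivity))
  have e : 1 - ((1 + a / t) / (1 + a / (t + s)))⁻¹ = s * (a / ((t + s) * (t + a))) := by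
    field_simp
    ring
  rw [e]
  gcongr
  linarith

lemma log_one_add_div_sub_le_mul {a t s : ℝ} (ha : 0 < a) (ht : 0 < t) (hs : 0 ≤ s) :
    log (1 + a / t) - log (1 + a / (t + s)) ≤ s * (a / (t * (t + a))) := by
  rw [← log_div (by positivity) (by positivity)]
  refine (log_le_sub_one_of_pos (by positivity)).trans ?_
  have e : (1 + a / t) / (1 + a / (t + s)) - 1 = s * (a / (t * (t + s + a))) := by
    field_simp
    ring
  rw [e]
  gcongr
  linarith

lemma summable_tail {a B : ℝ} (ha : 0 < a) (hB : 0 < B) :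
    Summable fun m : ℕ => if B ≤ m then a / ((m : ℝ) * (m + a)) else 0 := by
  refine Summable.of_nonneg_of_le (fun m => ?_) (fun m => ?_)
    ((summable_one_div_nat_pow.mpr one_lt_two).mul_left a)
  · split_ifs <;> positivity
  · split_ifs with h
    · have hm : (0 : ℝ) < m := hB.trans_le h
      rw [mul_one_div, pow_two]
      gcongr
      linarith
    · positivity

lemma abs_tsum_tail_sub_log_le {a B : ℝ} (ha : 0 < a) (hB : 0 < B) :
    |(∑' m : ℕ, if B ≤ m then a / ((m : ℝ) * (m + a)) else 0) - log (1 + a / B)|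
      ≤ a / B ^ 2 := by
  set M := ⌈B⌉₊ with hM
  set f : ℕ → ℝ := fun k => a / (((M + k : ℕ) : ℝ) * ((M + k : ℕ) + a)) with hf
  have hsum := summable_tail ha hB
  have hBM : B ≤ M := Nat.le_ceil B
  have hM0 : (0 : ℝ) < M := hB.trans_le hBM
  have hMB : (M : ℝ) < B + 1 := Nat.ceil_lt_add_one hB.le
  have hge : ∀ k : ℕ, B ≤ ((k + M : ℕ) : ℝ) := fun k => by
    push_cast; linarith [k.cast_nonneg (α := ℝ)]
  have htsum : (∑' m : ℕ, if B ≤ m then a / ((m : ℝ) * (m + a)) else 0) = ∑' k, f k := by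
    rw [← hsum.sum_add_tsum_nat_add M, sum_eq_zero, zero_add]
    · refine tsum_congr fun k => ?_
      rw [if_pos (hge k), add_comm k M]
    · intro i hi
      rw [mem_range, hM, Nat.lt_ceil] at hi
      rw [if_neg (not_le.mpr hi)]
  have hfs : Summable f := by
    have := (summable_nat_add_iff M).mpr hsum
    refine this.congr fun k => ?_
    rw [if_pos (hge k), add_comm k M]
  have hf0 : ∀ k, 0 ≤ f k := fun k => by simp only [hf]; positivity
  set L : ℝ → ℝ := fun t => log (1 + a / t) with hL
  have hL0 : ∀ k : ℕ, 0 ≤ L (M + k) := fun k =>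
    log_nonneg (le_add_of_nonneg_right (by positivity))
  have hstep1 : ∀ k : ℕ, f (k + 1) ≤ L (M + k) - L (M + (k + 1)) := fun k => by
    have h := mul_le_log_one_add_div_sub ha (t := M + k) (s := 1) (by positivity) zero_le_one
    simp only [hf, hL]
    push_cast
    rw [one_mul] at h
    simpa only [add_assoc] using h
  have hstep2 : ∀ k : ℕ, L (M + k) - L (M + (k + 1)) ≤ f k := fun k => by
    have h := log_one_add_div_sub_le_mul ha (t := M + k) (s := 1) (by positivity) zero_le_one
    simp only [hf, hL]
    push_cast
    rw [one_mul] at h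
    simpa only [add_assoc] using h
  have hf00 : f 0 ≤ a / B ^ 2 := by
    simp only [hf, add_zero]
    rw [pow_two]
    gcongr
    linarith
  have hupp : ∑' k, f k ≤ f 0 + L M := by
    rw [hfs.tsum_eq_zero_add]
    gcongr
    refine Real.tsum_le_of_sum_range_le (fun k => hf0 _) fun n => ?_
    have : ∑ k ∈ range n, f (k + 1) ≤ L M - L (M + n) := by
      induction n with
      | zero => simp
      | succ n ih =>
        rw [sum_range_succ]
        push_cast
        linarith [hstep1 n]
    linarith [hL0 n]
  have hlow : L M ≤ ∑' k, f k := by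
    have h1 : ∀ n : ℕ, L M - L (M + n) ≤ ∑' k, f k := fun n => by
      refine le_trans ?_ (hfs.sum_le_tsum (range n) fun k _ => hf0 k)
      induction n with
      | zero => simp
      | succ n ih =>
        rw [sum_range_succ]
        push_cast
        linarith [hstep2 n]
    have hlim : Tendsto (fun n : ℕ => L M - L (M + n)) atTop (𝓝 (L M - log (1 + 0))) := by
      refine tendsto_const_nhds.sub (Tendsto.log (tendsto_const_nhds.add ?_) (by norm_num))
      exact tendsto_const_nhds.div_atTop
        (tendsto_atTop_add_const_left _ _ tendsto_natCast_atTop_atTop)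
    rw [add_zero, log_one, sub_zero] at hlim
    exact le_of_tendsto' hlim h1
  have hstart := log_one_add_div_sub_le_mul ha hB (s := M - B) (by linarith)
  have hstart0 := mul_le_log_one_add_div_sub ha hB (s := M - B) (by linarith)
  rw [add_sub_cancel] at hstart hstart0
  have hb : (M - B) * (a / (B * (B + a))) ≤ a / B ^ 2 := by
    calc (M - B) * (a / (B * (B + a))) ≤ 1 * (a / (B * B)) := by
          gcongr <;> linarith
      _ = a / B ^ 2 := by rw [one_mul, pow_two]
  have hb0 : 0 ≤ (M - B) * (a / (M * (M + a))) := mul_nonneg (by linarith) (by positivity)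
  rw [htsum, abs_le]
  simp only [hL] at hupp hlow
  constructor <;> linarith

lemma abs_sum_tsum_sub_neg_Li2_le {x c B : ℝ} (hx : 0 < x) (hx1 : x ≤ 1) (hc : 0 < c)
    (hc1 : c < 1) (hB : 0 < B) :
    |∑ q ∈ Icc 1 ⌊c * B⌋₊, (∑' m : ℕ, if B ≤ m then x / ((m : ℝ) * (m + x * q)) else 0)
      - -Li2 (-(x * c))| ≤ 3 * x / B := by
  have hinner : ∀ q ∈ Icc 1 ⌊c * B⌋₊,
      |(∑' m : ℕ, if B ≤ m then x / ((m : ℝ) * (m + x * q)) else 0)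
        - log (1 + x / B * q) / q| ≤ x / B ^ 2 := by
    intro q hq
    have hq0 : (0 : ℝ) < q := by exact_mod_cast (mem_Icc.mp hq).1
    have h := abs_tsum_tail_sub_log_le (mul_pos hx hq0) hB
    have e : (∑' m : ℕ, if B ≤ m then x / ((m : ℝ) * (m + x * q)) else 0)
        = (∑' m : ℕ, if B ≤ m then x * q / ((m : ℝ) * (m + x * q)) else 0) / q := by
      rw [← tsum_div_const]
      refine tsum_congr fun m => ?_
      split_ifs
      · field_simp
      · simp
    rw [e, ← sub_div, abs_div, abs_of_pos hq0, div_le_iff₀ hq0]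
    have e1 : x / B * q = x * q / B := by ring
    rw [e1]
    calc _ ≤ x * q / B ^ 2 := h
      _ = x / B ^ 2 * q := by ring
  have hcB : 0 ≤ c * B := by positivity
  have hδ : x / B * (c * B) = x * c := by field_simp
  have hR := abs_sum_log_one_add_sub_le (δ := x / B) (A := c * B) (by positivity) hcB
    (by rw [hδ]; nlinarith)
  rw [hδ] at hR
  have hS : |∑ q ∈ Icc 1 ⌊c * B⌋₊,
        (∑' m : ℕ, if B ≤ m then x / ((m : ℝ) * (m + x * q)) else 0)
      - ∑ q ∈ Icc 1 ⌊c * B⌋₊, log (1 + x / B * q) / q| ≤ x / B := by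
    rw [← sum_sub_distrib]
    refine (abs_sum_le_sum_abs _ _).trans ((sum_le_sum hinner).trans ?_)
    rw [sum_const, Nat.card_Icc, Nat.add_sub_cancel, nsmul_eq_mul]
    calc (⌊c * B⌋₊ : ℝ) * (x / B ^ 2) ≤ B * (x / B ^ 2) := by
          gcongr
          exact (Nat.floor_le hcB).trans (by nlinarith)
      _ = x / B := by field_simp
  refine (abs_sub_le _ _ _).trans ((add_le_add hS hR).trans (le_of_eq ?_))
  ring

/-! ### Möbius inversion -/

open ArithmeticFunction in
lemma sum_moebius_dvd_and_dvd {n a : ℕ} (b : ℕ) (ha : a ∈ Icc 1 n) :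
    (∑ d ∈ Icc 1 n, if d ∣ a ∧ d ∣ b then (moebius d : ℝ) else 0)
      = if Nat.gcd a b = 1 then 1 else 0 := by
  rw [mem_Icc] at ha
  have hg : Nat.gcd a b ≠ 0 := (Nat.gcd_pos_of_pos_left b ha.1).ne'
  have h := congrArg (fun F : ArithmeticFunction ℝ => F (Nat.gcd a b))
    (coe_zeta_mul_coe_moebius (R := ℝ))
  simp only [coe_zeta_mul_apply, one_apply] at h
  rw [← h, ← sum_filter]
  refine sum_congr ?_ fun d _ => rfl
  ext d
  simp only [mem_filter, mem_Icc, Nat.mem_divisors, Nat.dvd_gcd_iff]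
  constructor
  · rintro ⟨_, h⟩
    exact ⟨h, hg⟩
  · rintro ⟨h, _⟩
    exact ⟨⟨Nat.pos_of_dvd_of_pos h.1 ha.1, (Nat.le_of_dvd ha.1 h.1).trans ha.2⟩, h⟩

lemma sum_Icc_ite_dvd {d n : ℕ} (hd : 0 < d) (g : ℕ → ℝ) :
    (∑ a ∈ Icc 1 n, if d ∣ a then g a else 0) = ∑ q ∈ Icc 1 (n / d), g (d * q) := by
  rw [← sum_filter]
  symm
  refine sum_bij (fun q _ => d * q) ?_ ?_ ?_ ?_
  · intro q hq
    rw [mem_Icc, Nat.le_div_iff_mul_le hd] at hq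
    rw [mem_filter, mem_Icc]
    exact ⟨⟨Nat.mul_pos hd hq.1, by rw [mul_comm]; exact hq.2⟩, dvd_mul_right d q⟩
  · intro a _ b _ h
    exact Nat.eq_of_mul_eq_mul_left hd h
  · intro a ha
    rw [mem_filter, mem_Icc] at ha
    obtain ⟨⟨h1, h2⟩, q, rfl⟩ := ha
    refine ⟨q, ?_, rfl⟩
    rw [mem_Icc, Nat.le_div_iff_mul_le hd]
    exact ⟨Nat.pos_of_mul_pos_left h1, by rw [mul_comm]; exact h2⟩
  · intro a _
    rfl

lemma tsum_ite_dvd {d : ℕ} (hd : 0 < d) (g : ℕ → ℝ) :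
    (∑' b : ℕ, if d ∣ b then g b else 0) = ∑' m : ℕ, g (d * m) := by
  have hinj : Function.Injective fun m : ℕ => d * m := fun a b h => Nat.eq_of_mul_eq_mul_left hd h
  rw [← hinj.tsum_eq (f := fun b => if d ∣ b then g b else 0)]
  · simp
  · intro b hb
    by_contra h
    refine hb (if_neg fun hdb => h ?_)
    obtain ⟨m, rfl⟩ := hdb
    exact ⟨m, rfl⟩

open ArithmeticFunction in
lemma tsum_sum_coprime_eq {n : ℕ} (g : ℕ → ℕ → ℝ) (hg : ∀ a ∈ Icc 1 n, Summable (g a)) :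
    (∑' b : ℕ, ∑ a ∈ Icc 1 n, if Nat.gcd a b = 1 then g a b else 0)
      = ∑ d ∈ Icc 1 n, (moebius d : ℝ) *
          ∑ q ∈ Icc 1 (n / d), ∑' m : ℕ, g (d * q) (d * m) := by
  have hs : ∀ d a : ℕ, a ∈ Icc 1 n → Summable fun b => if d ∣ b then g a b else 0 := by
    intro d a ha
    exact ((hg a ha).indicator {b | d ∣ b}).congr fun b => by simp [Set.indicator_apply]
  have hs' : ∀ d a : ℕ, a ∈ Icc 1 n → Summable fun b =>
      (if d ∣ a ∧ d ∣ b then (moebius d : ℝ) else 0) * g a b := by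
    intro d a ha
    by_cases h : d ∣ a
    · refine ((hs d a ha).mul_left (moebius d : ℝ)).congr fun b => ?_
      by_cases hb : d ∣ b <;> simp [h, hb]
    · simp [h]
  calc (∑' b : ℕ, ∑ a ∈ Icc 1 n, if Nat.gcd a b = 1 then g a b else 0)
      = ∑' b : ℕ, ∑ a ∈ Icc 1 n, ∑ d ∈ Icc 1 n,
          (if d ∣ a ∧ d ∣ b then (moebius d : ℝ) else 0) * g a b := by
        refine tsum_congr fun b => sum_congr rfl fun a ha => ?_
        rw [← sum_mul, sum_moebius_dvd_and_dvd b ha]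
        split_ifs <;> simp
    _ = ∑ a ∈ Icc 1 n, ∑ d ∈ Icc 1 n, ∑' b : ℕ,
          (if d ∣ a ∧ d ∣ b then (moebius d : ℝ) else 0) * g a b := by
        rw [Summable.tsum_finsetSum fun a ha => summable_sum fun d _ => hs' d a ha]
        exact sum_congr rfl fun a ha => Summable.tsum_finsetSum fun d _ => hs' d a ha
    _ = ∑ d ∈ Icc 1 n, (moebius d : ℝ) *
          ∑ q ∈ Icc 1 (n / d), ∑' m : ℕ, g (d * q) (d * m) := by
        rw [sum_comm]
        refine sum_congr rfl fun d hd => ?_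
        have hd0 : 0 < d := (mem_Icc.mp hd).1
        rw [← sum_Icc_ite_dvd hd0 fun a => ∑' m : ℕ, g a (d * m), mul_sum]
        refine sum_congr rfl fun a _ => ?_
        by_cases h : d ∣ a
        · rw [if_pos h, ← tsum_ite_dvd hd0, ← tsum_mul_left]
          refine tsum_congr fun b => ?_
          by_cases hb : d ∣ b <;> simp [h, hb]
        · simp [h]

open ArithmeticFunction in
lemma hasSum_moebius_div_sq : HasSum (fun d : ℕ => (moebius d : ℝ) / (d : ℝ) ^ 2) (6 / π ^ 2) := by
  have h2 : (1 : ℝ) < (2 : ℂ).re := by norm_num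
  have h := LSeries_zeta_mul_Lseries_moebius h2
  rw [LSeries_zeta_eq_riemannZeta h2, riemannZeta_two] at h
  have hsum := (LSeriesSummable_moebius_iff.mpr h2).LSeriesHasSum
  have hpi : (π : ℂ) ≠ 0 := by exact_mod_cast pi_ne_zero
  have hval : LSeries (fun n => (moebius n : ℂ)) 2 = ((6 / π ^ 2 : ℝ) : ℂ) := by
    push_cast
    field_simp at h ⊢
    linear_combination h
  rw [hval] at hsum
  rw [← Complex.hasSum_ofReal]
  refine HasSum.congr_fun hsum ?_
  intro d
  rcases eq_or_ne d 0 with rfl | hd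
  · simp
  · rw [LSeries.term_of_ne_zero hd]
    push_cast
    norm_cast

open ArithmeticFunction in
lemma abs_moebius_div_sq_le (d : ℕ) : |(moebius d : ℝ) / (d : ℝ) ^ 2| ≤ ((d : ℝ) ^ 2)⁻¹ := by
  rw [abs_div, abs_of_nonneg (by positivity : (0 : ℝ) ≤ (d : ℝ) ^ 2), div_eq_mul_inv]
  refine mul_le_of_le_one_left (by positivity) ?_
  exact_mod_cast abs_moebius_le_one (n := d)

open ArithmeticFunction in
lemma abs_sum_moebius_div_sq_sub_le (n : ℕ) :
    |∑ d ∈ Icc 1 n, (moebius d : ℝ) / (d : ℝ) ^ 2 - 6 / π ^ 2| ≤ 2 / ((n : ℝ) + 1) := by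
  have hlim := (tendsto_const_nhds (x := ∑ d ∈ Icc 1 n, (moebius d : ℝ) / (d : ℝ) ^ 2)).sub
    hasSum_moebius_div_sq.tendsto_sum_nat
  refine le_of_tendsto hlim.abs ?_
  filter_upwards [eventually_gt_atTop n] with N hN
  have hsplit : ∑ d ∈ range N, (moebius d : ℝ) / (d : ℝ) ^ 2
      = ∑ d ∈ Icc 1 n, (moebius d : ℝ) / (d : ℝ) ^ 2
        + ∑ d ∈ Ioo n N, (moebius d : ℝ) / (d : ℝ) ^ 2 := by
    rw [← sum_union]
    · symm
      refine sum_subset ?_ ?_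
      · intro d
        simp only [mem_union, mem_Icc, mem_Ioo, mem_range]
        omega
      · intro d hd hd'
        simp only [mem_union, mem_Icc, mem_Ioo, mem_range] at hd hd'
        have : d = 0 := by omega
        simp [this]
    · rw [disjoint_left]
      intro d
      simp only [mem_Icc, mem_Ioo]
      omega
  rw [hsplit, sub_add_cancel_left, abs_neg]
  exact (abs_sum_le_sum_abs _ _).trans
    ((sum_le_sum fun d _ => abs_moebius_div_sq_le d).trans (sum_Ioo_inv_sq_le n N))

lemma sum_Icc_inv_le_one_add_log (n : ℕ) : ∑ d ∈ Icc 1 n, (d : ℝ)⁻¹ ≤ 1 + log n := by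
  have h := harmonic_le_one_add_log n
  rw [harmonic_eq_sum_Icc] at h
  push_cast at h
  exact h

/-! ### The coprime double sum -/

lemma summable_ite_div {x B : ℝ} (hx : 0 < x) (hB : 0 < B) {q : ℕ} (hq : 0 < q) :
    Summable fun m : ℕ => if B ≤ m then x / ((m : ℝ) * (m + x * q)) else 0 := by
  have hq0 : (0 : ℝ) < q := by exact_mod_cast hq
  refine ((summable_tail (mul_pos hx hq0) hB).div_const (q : ℝ)).congr fun m => ?_
  split_ifs
  · field_simp
  · simp

lemma tsum_ite_div_mul {x B : ℝ} {d : ℕ} (hd : 0 < d) (q : ℕ) :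
    (∑' m : ℕ, if B ≤ ((d * m : ℕ) : ℝ) then
        x / (((d * m : ℕ) : ℝ) * ((d * m : ℕ) + x * (d * q : ℕ))) else 0)
      = ((d : ℝ) ^ 2)⁻¹ * ∑' m : ℕ, if B / d ≤ m then x / ((m : ℝ) * (m + x * q)) else 0 := by
  have hd0 : (0 : ℝ) < d := by exact_mod_cast hd
  rw [← tsum_mul_left]
  refine tsum_congr fun m => ?_
  have e : B / d ≤ m ↔ B ≤ ((d * m : ℕ) : ℝ) := by
    rw [div_le_iff₀ hd0, mul_comm]; push_cast; rfl
  simp only [e]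
  split_ifs
  · push_cast
    rw [show (d : ℝ) * m * (d * m + x * (d * q)) = d ^ 2 * (m * (m + x * q)) by ring,
      div_mul_eq_div_div_swap, div_eq_inv_mul _ ((d : ℝ) ^ 2)]
  · simp

open ArithmeticFunction (moebius) in
lemma abs_tsum_coprime_sub_le {x c B : ℝ} (hx : 0 < x) (hx1 : x ≤ 1) (hc : 0 < c)
    (hc1 : c < 1) (hB : 0 < B) :
    |(∑' b : ℕ, ∑ a ∈ Icc 1 ⌊c * B⌋₊, if Nat.gcd a b = 1 then
        (if B ≤ b then x / ((b : ℝ) * (b + x * a)) else 0) else 0)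
      - 6 / π ^ 2 * -Li2 (-(x * c))|
      ≤ 3 * x / B * (1 + log ⌊c * B⌋₊) + 2 * x / B := by
  rw [tsum_sum_coprime_eq (fun a b => if B ≤ b then x / ((b : ℝ) * (b + x * a)) else 0)
    fun a ha => summable_ite_div hx hB (mem_Icc.mp ha).1]
  set n := ⌊c * B⌋₊ with hn
  set E := -Li2 (-(x * c)) with hE
  have hxc : x * c < 1 := by nlinarith
  have hE0 : 0 ≤ E := by
    have h := neg_Li2_neg_mono le_rfl (mul_pos hx hc).le hxc
    rwa [neg_zero, Li2_zero, neg_zero] at h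
  have hEx : E ≤ x * c := by
    have h := neg_Li2_neg_sub_le_sub le_rfl (mul_pos hx hc).le hxc
    rwa [neg_zero, Li2_zero, neg_zero, sub_zero, sub_zero] at h
  have hmain : |(∑ d ∈ Icc 1 n, (moebius d : ℝ) * ∑ q ∈ Icc 1 (n / d), ∑' m : ℕ,
        if B ≤ ((d * m : ℕ) : ℝ) then
          x / (((d * m : ℕ) : ℝ) * ((d * m : ℕ) + x * (d * q : ℕ))) else 0)
      - (∑ d ∈ Icc 1 n, (moebius d : ℝ) / (d : ℝ) ^ 2) * E| ≤ 3 * x / B * (1 + log n) := by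
    rw [sum_mul, ← sum_sub_distrib]
    calc _ ≤ ∑ d ∈ Icc 1 n, 3 * x / B * (d : ℝ)⁻¹ := by
          refine (abs_sum_le_sum_abs _ _).trans (sum_le_sum fun d hd => ?_)
          have hd1 : 0 < d := (mem_Icc.mp hd).1
          have hd0 : (0 : ℝ) < d := by exact_mod_cast hd1
          have h := abs_sum_tsum_sub_neg_Li2_le hx hx1 hc hc1 (div_pos hB hd0)
          rw [← mul_div_assoc, Nat.floor_div_natCast, ← hn, ← hE] at h
          simp only [tsum_ite_div_mul hd1]
          rw [← mul_sum, ← mul_assoc, ← div_eq_mul_inv, ← mul_sub, abs_mul]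
          calc _ ≤ ((d : ℝ) ^ 2)⁻¹ * (3 * x / (B / d)) :=
                mul_le_mul (abs_moebius_div_sq_le d) h (abs_nonneg _) (by positivity)
            _ = 3 * x / B * (d : ℝ)⁻¹ := by field_simp
      _ ≤ _ := by
          rw [← mul_sum]
          gcongr
          exact sum_Icc_inv_le_one_add_log n
  have htail : |(∑ d ∈ Icc 1 n, (moebius d : ℝ) / (d : ℝ) ^ 2) * E - 6 / π ^ 2 * E|
      ≤ 2 * x / B := by
    rw [← sub_mul, abs_mul, abs_of_nonneg hE0]
    calc _ ≤ 2 / ((n : ℝ) + 1) * (x * c) :=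
          mul_le_mul (abs_sum_moebius_div_sq_sub_le n) hEx hE0 (by positivity)
      _ ≤ 2 / (c * B) * (x * c) := by
          gcongr
          exact (Nat.lt_floor_add_one _).le
      _ = 2 * x / B := by field_simp
  exact (abs_sub_le _ _ _).trans (add_le_add hmain htail)

theorem N_asymptotic_second_case (x1 x2 y1 y2 : ℝ)
    (hx1 : 0 < x1) (hx1' : x1 ≤ 1)
    (hx2 : 0 < x2) (hx2' : x2 ≤ 1) (hy1 : 0 < y1) (hy1' : y1 ≤ 1)
    (hy2 : 0 < y2) (hy2' : y2 ≤ 1) (hcase : y1 * y2 < x2) :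
    ∃ C : ℝ, 0 < C ∧ ∀ R : ℝ, 2 ≤ R →
      |NN x1 x2 y1 y2 R - (-(2 / (π ^ 2 / 6)) * Li2 (-(x1 * y1 * y2)))| ≤
        C * x1 * Real.log R / R := by
  refine ⟨26, by norm_num, fun R hR => ?_⟩
  have hR0 : 0 < R := by linarith
  have hB : 0 < R / y2 := by positivity
  have hcB : y1 * y2 * (R / y2) = y1 * R := by field_simp
  have hNN : NN x1 x2 y1 y2 R = 2 * ∑' b : ℕ, ∑ a ∈ Icc 1 ⌊y1 * y2 * (R / y2)⌋₊,
      if Nat.gcd a b = 1 then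
        (if R / y2 ≤ b then x1 / ((b : ℝ) * (b + x1 * a)) else 0) else 0 := by
    rw [NN, hcB]
    congr 1
    refine tsum_congr fun b => ?_
    split_ifs with h
    · have hmin : min (x2 * b) (y1 * R) = y1 * R := by
        refine min_eq_right ?_
        calc y1 * R = y1 * y2 * (R / y2) := hcB.symm
          _ ≤ x2 * b := by gcongr
      rw [hmin]
    · simp
  have hmain := abs_tsum_coprime_sub_le hx1 hx1' (mul_pos hy1 hy2) (hcase.trans_le hx2') hB
  rw [← mul_assoc] at hmain
  have hlog0 : 0 < log R := log_pos (by linarith)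
  have hlog2 : 1 ≤ 2 * log R := by
    have := log_le_log two_pos hR
    linarith [log_two_gt_d9]
  have hlogn : log ⌊y1 * y2 * (R / y2)⌋₊ ≤ log R := by
    rcases Nat.eq_zero_or_pos ⌊y1 * y2 * (R / y2)⌋₊ with h | h
    · simpa [h] using hlog0.le
    · refine log_le_log (by exact_mod_cast h) ?_
      rw [hcB]
      exact (Nat.floor_le (by positivity)).trans (by nlinarith)
  have hBR : x1 / (R / y2) ≤ x1 / R := by
    gcongr
    rw [le_div_iff₀ hy2]
    nlinarith
  rw [hNN, show ∀ S L : ℝ, 2 * S - -(2 / (π ^ 2 / 6)) * L = 2 * (S - 6 / π ^ 2 * -L) by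
    intro S L; field_simp, abs_mul, abs_two]
  calc _ ≤ 2 * (3 * x1 / (R / y2) * (1 + log ⌊y1 * y2 * (R / y2)⌋₊) + 2 * x1 / (R / y2)) := by
        gcongr
    _ ≤ 2 * (3 * x1 / (R / y2) * (3 * log R) + 2 * x1 / (R / y2) * (2 * log R)) := by
        gcongr
        · linarith
        · exact le_mul_of_one_le_right (by positivity) hlog2
    _ = 26 * (x1 / (R / y2)) * log R := by ring
    _ ≤ 26 * (x1 / R) * log R := by gcongr
    _ = 26 * x1 * Real.log R / R := by ring
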